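/- The half-graphon W_h, defined by W_h(x,y) = 1 if x + y ≤ 1 and W_h(x,y) = 0 otherwise, is finitely forcible in 𝒲. -/

import Mathlib

open MeasureTheory
open scoped Classical

noncomputable section

/-- The unit interval `[0,1]` as a subset of `ℝ`. -/
def I01 : Set ℝ := Set.Icc 0 1

/-- The cube `[0,1]^n`. -/
def cube (n : ℕ) : Set (Fin n → ℝ) := Set.univ.pi fun _ => I01

/-- `W` belongs to `𝒲`: a bounded symmetric measurable function on `[0,1]²`. -/
def memW (W : ℝ → ℝ → ℝ) : Prop :=
  Measurable (Function.uncurry W) ∧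
  (∀ x ∈ I01, ∀ y ∈ I01, W x y = W y x) ∧
  ∃ C : ℝ, ∀ x ∈ I01, ∀ y ∈ I01, |W x y| ≤ C

/-- `W` belongs to `𝒲₀`: a graphon, i.e. symmetric measurable with values in `[0,1]`. -/
def memW0 (W : ℝ → ℝ → ℝ) : Prop :=
  Measurable (Function.uncurry W) ∧
  (∀ x ∈ I01, ∀ y ∈ I01, W x y = W y x) ∧
  ∀ x ∈ I01, ∀ y ∈ I01, W x y ∈ Set.Icc (0 : ℝ) 1

/-- Homomorphism density `t(F,W)` of a finite simple graph `F` in `W`. -/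
def homDensity {n : ℕ} (F : SimpleGraph (Fin n)) (W : ℝ → ℝ → ℝ) : ℝ :=
  ∫ x in cube n,
    ∏ p ∈ Finset.univ.filter (fun p : Fin n × Fin n => p.1 < p.2 ∧ F.Adj p.1 p.2),
      W (x p.1) (x p.2)

/-- Two kernels are weakly isomorphic if all their homomorphism densities agree. -/
def WeaklyIsomorphic (U W : ℝ → ℝ → ℝ) : Prop :=
  ∀ (n : ℕ) (F : SimpleGraph (Fin n)), homDensity F U = homDensity F W

/-- `W` is finitely forcible within the class `A`. -/
def FinitelyForcible (A : (ℝ → ℝ → ℝ) → Prop) (W : ℝ → ℝ → ℝ) : Prop :=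
  A W ∧ ∃ (k : ℕ) (n : Fin k → ℕ) (F : ∀ i, SimpleGraph (Fin (n i))),
    ∀ U, A U → (∀ i, homDensity (F i) U = homDensity (F i) W) → WeaklyIsomorphic U W

/-- Density function `t^k(F,W)` of a `k`-labeled graph, as a function of the
labeled variables; the graph has `k` labeled and `m` unlabeled vertices. -/
def labDensity {k m : ℕ} (F : SimpleGraph (Fin (k + m))) (W : ℝ → ℝ → ℝ)
    (x : Fin k → ℝ) : ℝ :=
  ∫ y in cube m,
    ∏ p ∈ Finset.univ.filter
        (fun p : Fin (k + m) × Fin (k + m) => p.1 < p.2 ∧ F.Adj p.1 p.2),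
      W (Fin.append x y p.1) (Fin.append x y p.2)

/-! Let `d` be the degree function of `U` and let `c = U ∘ U` be its codegree function. A signed
sum of densities of subgraphs of `K_{2,4}` expresses the integral of
`((c(x, y) - d(x)) (c(x, y) - d(y)))²`; its vanishing gives `min (d x) (d y) ≤ c(x, y)` almost
everywhere. Star densities fix `∫ d = 1/2` and `∫ d² = ∫∫ c = 1/3`, so
`∫∫ min (d x) (d y) ≤ 1/3`. If `s` is uniform on `[0, 1]`, then `E min (r, s) ≥ r - r²/2` for every
real `r`, so, with `x, y` and `s, t` independent, the Cramér distance
`∫ (P(d ≥ r) - P(s ≥ r))² dr = E min (d x, d y) + E min (s, t) - 2 E min (d x, s)` is at most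
`1/3 + 1/3 - 2 (1/2 - 1/6) = 0`. Hence `d` is uniformly distributed, and then
`c(x, y) = min (d x) (d y)`.

With `φ = 1 - d`, this says that `U ∘ U` is the pullback of `W_h ∘ W_h` along `φ`. A polynomial `p`
with derivative `q` satisfies `p(a) = p(1) - T_{W_h} (q(1 - ·)) (a)`, so induction on the degree
gives `T_U (p ∘ φ) = (T_{W_h} p) ∘ φ` for every polynomial `p`. By density of polynomials, the mixed
products in the square of the symmetric kernel `V(x, y) = U(x, y) - W_h(φ x, φ y)` cancel, so
`V ∘ V = 0` and therefore `V = 0` almost everywhere. -/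

open Function Polynomial unitInterval

section BoundedMeasurable

/-- A bounded measurable real function: the class, stable under all operations below, in which
every integral is finite and Fubini's theorem applies. Boundedness is everywhere, not essential. -/
@[fun_prop]
structure BoundedMeasurable {α : Type*} [MeasurableSpace α] (f : α → ℝ) : Prop where
  measurable : Measurable f
  bounded : ∃ C : ℝ, ∀ x, |f x| ≤ C

namespace BoundedMeasurable

variable {α β : Type*} [MeasurableSpace α] [MeasurableSpace β] {f g : α → ℝ}

attribute [fun_prop] BoundedMeasurable.measurable

lemma integrable {μ : Measure α} [IsFiniteMeasure μ] (hf : BoundedMeasurable f) :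
    Integrable f μ := by
  obtain ⟨hm, C, hC⟩ := hf
  exact .of_bound hm.aestronglyMeasurable C (.of_forall hC)

@[fun_prop]
lemma const (c : ℝ) : BoundedMeasurable fun _ : α => c :=
  ⟨measurable_const, |c|, fun _ => le_rfl⟩

@[fun_prop]
lemma comp {h : β → α} (hf : BoundedMeasurable f) (hh : Measurable h) :
    BoundedMeasurable fun x => f (h x) :=
  ⟨hf.measurable.comp hh, hf.bounded.imp fun _ hC x => hC (h x)⟩

@[fun_prop]
lemma mul (hf : BoundedMeasurable f) (hg : BoundedMeasurable g) :
    BoundedMeasurable fun x => f x * g x := by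
  obtain ⟨hfm, C, hC⟩ := hf
  obtain ⟨hgm, C', hC'⟩ := hg
  refine ⟨hfm.mul hgm, C * C', fun x => ?_⟩
  rw [abs_mul]
  exact mul_le_mul (hC x) (hC' x) (abs_nonneg _) ((abs_nonneg _).trans (hC x))

@[fun_prop]
lemma add (hf : BoundedMeasurable f) (hg : BoundedMeasurable g) :
    BoundedMeasurable fun x => f x + g x := by
  obtain ⟨hfm, C, hC⟩ := hf
  obtain ⟨hgm, C', hC'⟩ := hg
  exact ⟨hfm.add hgm, C + C', fun x => (abs_add_le _ _).trans (add_le_add (hC x) (hC' x))⟩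

@[fun_prop]
lemma sub (hf : BoundedMeasurable f) (hg : BoundedMeasurable g) :
    BoundedMeasurable fun x => f x - g x := by
  simpa only [sub_eq_add_neg, neg_one_mul] using hf.add ((const (-1)).mul hg)

@[fun_prop]
lemma pow (hf : BoundedMeasurable f) (n : ℕ) : BoundedMeasurable fun x => f x ^ n := by
  induction n with
  | zero => simpa only [pow_zero] using const 1
  | succ n ih => simpa only [pow_succ] using ih.mul hf

@[fun_prop]
lemma abs (hf : BoundedMeasurable f) : BoundedMeasurable fun x => |f x| :=
  ⟨hf.measurable.abs, hf.bounded.imp fun _ hC x => (abs_abs (f x)).trans_le (hC x)⟩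

@[fun_prop]
lemma min (hf : BoundedMeasurable f) (hg : BoundedMeasurable g) :
    BoundedMeasurable fun x => min (f x) (g x) := by
  obtain ⟨hfm, C, hC⟩ := hf
  obtain ⟨hgm, C', hC'⟩ := hg
  refine ⟨hfm.min hgm, max C C', fun x => ?_⟩
  exact abs_min_le_max_abs_abs.trans (max_le_max (hC x) (hC' x))

@[fun_prop]
lemma prod {ι : Type*} (s : Finset ι) {F : ι → α → ℝ} (hF : ∀ i, BoundedMeasurable (F i)) :
    BoundedMeasurable fun x => ∏ i ∈ s, F i x := by
  induction s using Finset.induction_on with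
  | empty => simpa only [Finset.prod_empty] using const 1
  | insert i s hi ih => simpa only [Finset.prod_insert hi] using (hF i).mul ih

@[fun_prop]
lemma integral {F : α → β → ℝ} (hF : BoundedMeasurable (uncurry F)) {ν : Measure β}
    [IsFiniteMeasure ν] : BoundedMeasurable fun x => ∫ y, F x y ∂ν := by
  obtain ⟨hm, C, hC⟩ := hF
  exact ⟨hm.stronglyMeasurable.integral_prod_right.measurable, C * ν.real Set.univ,
    fun x => (Real.norm_eq_abs _).symm.trans_le <|
      norm_integral_le_of_norm_le_const (.of_forall fun y => hC (x, y))⟩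

lemma ite {p : α → Prop} (hp : MeasurableSet {x | p x}) :
    BoundedMeasurable fun x => if p x then (1 : ℝ) else 0 :=
  ⟨.ite hp measurable_const measurable_const, 1, fun x => by split_ifs <;> simp⟩

lemma of_continuous {X : Type*} [TopologicalSpace X] [CompactSpace X] [MeasurableSpace X]
    [OpensMeasurableSpace X] {f : X → ℝ} (hf : Continuous f) : BoundedMeasurable f := by
  obtain ⟨C, hC⟩ := isCompact_univ.exists_bound_of_continuousOn hf.continuousOn
  exact ⟨hf.measurable, C, fun x => hC x (Set.mem_univ x)⟩

end BoundedMeasurable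

/-- Fubini in operator form: `⟨f, T_B g⟩ = ⟨T_{Bᵀ} f, g⟩`, and also `(AB)g = A(Bg)`
when `f` is a row of `A`. -/
lemma integral_mul_integral_mul {α β : Type*} [MeasurableSpace α] [MeasurableSpace β]
    {μ : Measure α} {ν : Measure β} [IsFiniteMeasure μ] [IsFiniteMeasure ν]
    {f : α → ℝ} {B : α → β → ℝ} {g : β → ℝ} (hf : BoundedMeasurable f)
    (hB : BoundedMeasurable (uncurry B)) (hg : BoundedMeasurable g) :
    ∫ x, f x * ∫ y, B x y * g y ∂ν ∂μ = ∫ y, (∫ x, f x * B x y ∂μ) * g y ∂ν := by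
  have hfBg : BoundedMeasurable (uncurry fun x y => f x * (B x y * g y)) := by
    simp only [uncurry_def]; fun_prop
  simp only [← integral_const_mul, ← integral_mul_const, mul_assoc]
  exact integral_integral_swap hfBg.integrable

end BoundedMeasurable

section Kernel

/-- The integral operator `T_U f (x) = ∫ U(x, z) f(z) dν(z)` of a kernel `U`. -/
def kernelOp {α β : Type*} [MeasurableSpace β] (ν : Measure β) (U : α → β → ℝ) (f : β → ℝ)
    (x : α) : ℝ :=
  ∫ z, U x z * f z ∂ν

/-- The operator product `(U ∘ V)(x, y) = ∫ U(x, z) V(z, y) dν(z)` of two kernels. -/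
def kernelComp {α β γ : Type*} [MeasurableSpace β] (ν : Measure β) (U : α → β → ℝ)
    (V : β → γ → ℝ) (x : α) (y : γ) : ℝ :=
  ∫ z, U x z * V z y ∂ν

variable {α β γ : Type*} [MeasurableSpace α] [MeasurableSpace β] [MeasurableSpace γ]
  {μ : Measure α} {ν : Measure β} {ρ : Measure γ}
  [IsFiniteMeasure μ] [IsFiniteMeasure ν] [IsFiniteMeasure ρ]

@[fun_prop]
lemma BoundedMeasurable.kernelOp {U : α → β → ℝ} {f : β → ℝ}
    (hU : BoundedMeasurable (uncurry U)) (hf : BoundedMeasurable f) :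
    BoundedMeasurable (kernelOp ν U f) := by
  unfold _root_.kernelOp; fun_prop

lemma kernelOp_kernelOp {U : α → β → ℝ} {V : β → γ → ℝ} {f : γ → ℝ}
    (hU : BoundedMeasurable (uncurry U)) (hV : BoundedMeasurable (uncurry V))
    (hf : BoundedMeasurable f) (x : α) :
    kernelOp ν U (kernelOp ρ V f) x = kernelOp ρ (kernelComp ν U V) f x :=
  integral_mul_integral_mul (by fun_prop) hV hf

lemma ae_eq_zero_of_setIntegral_prod_eq_zero {F : α × β → ℝ} (hF : Integrable F (μ.prod ν))
    (h : ∀ A B, MeasurableSet A → MeasurableSet B → ∫ p in A ×ˢ B, F p ∂(μ.prod ν) = 0) :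
    F =ᵐ[μ.prod ν] 0 := by
  refine hF.ae_eq_zero_of_forall_setIntegral_eq_zero fun s hs _ => ?_
  induction s, hs using
    MeasurableSpace.induction_on_inter generateFrom_prod.symm isPiSystem_prod with
  | empty => exact setIntegral_empty
  | basic t ht =>
    obtain ⟨A, hA, B, hB, rfl⟩ := ht
    exact h A B hA hB
  | compl t ht ih =>
    have huniv := h Set.univ Set.univ .univ .univ
    rw [Set.univ_prod_univ, setIntegral_univ] at huniv
    rw [setIntegral_compl ht hF, huniv, ih (measure_lt_top _ _), sub_zero]
  | iUnion t hd ht ih =>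
    rw [integral_iUnion ht hd hF.integrableOn]
    simp only [ih _ (measure_lt_top _ _), tsum_zero]

lemma ae_eq_zero_of_kernelOp_ae_eq_zero {V : α → β → ℝ} (hV : BoundedMeasurable (uncurry V))
    (h : ∀ f, BoundedMeasurable f → kernelOp ν V f =ᵐ[μ] 0) : uncurry V =ᵐ[μ.prod ν] 0 := by
  refine ae_eq_zero_of_setIntegral_prod_eq_zero hV.integrable fun A B _ hB => ?_
  rw [setIntegral_prod _ hV.integrable.integrableOn]
  refine integral_eq_zero_of_ae (ae_restrict_of_ae ?_)
  filter_upwards [h _ (.ite (p := (· ∈ B)) hB)] with x hx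
  rw [← hx, ← integral_indicator hB]
  simp [kernelOp, Set.indicator_apply]

lemma kernelOp_ae_eq_zero_of_kernelComp_self {V : α → α → ℝ}
    (hV : BoundedMeasurable (uncurry V)) (hsymm : ∀ x y, V x y = V y x)
    (hVV : ∀ᵐ p ∂(μ.prod μ), kernelComp μ V V p.1 p.2 = 0)
    {f : α → ℝ} (hf : BoundedMeasurable f) : kernelOp μ V f =ᵐ[μ] 0 := by
  have hTT : kernelOp μ V (kernelOp μ V f) =ᵐ[μ] 0 := by
    filter_upwards [Measure.ae_ae_of_ae_prod hVV] with x hx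
    rw [kernelOp_kernelOp hV hV hf]
    refine integral_eq_zero_of_ae ?_
    filter_upwards [hx] with y hy
    simp [hy]
  have hnorm : ∫ x, kernelOp μ V f x * kernelOp μ V f x ∂μ = 0 := by
    have hself := integral_mul_integral_mul (μ := μ) (ν := μ) (f := kernelOp μ V f)
      (by fun_prop) hV hf
    refine hself.trans (integral_eq_zero_of_ae ?_)
    filter_upwards [hTT] with y hy
    have : ∫ x, kernelOp μ V f x * V x y ∂μ = kernelOp μ V (kernelOp μ V f) y :=
      integral_congr_ae (.of_forall fun x => by simp only [hsymm y x, mul_comm])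
    simp [this, hy]
  have hsq : BoundedMeasurable fun x => kernelOp μ V f x * kernelOp μ V f x := by fun_prop
  rw [integral_eq_zero_iff_of_nonneg (fun x => mul_self_nonneg _) hsq.integrable] at hnorm
  filter_upwards [hnorm] with x hx
  exact mul_self_eq_zero.1 hx

lemma ae_eq_zero_of_kernelComp_self {V : α → α → ℝ}
    (hV : BoundedMeasurable (uncurry V)) (hsymm : ∀ x y, V x y = V y x)
    (hVV : ∀ᵐ p ∂(μ.prod μ), kernelComp μ V V p.1 p.2 = 0) : uncurry V =ᵐ[μ.prod μ] 0 :=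
  ae_eq_zero_of_kernelOp_ae_eq_zero hV fun _ =>
    kernelOp_ae_eq_zero_of_kernelComp_self hV hsymm hVV

end Kernel

section PolynomialDensity

lemma exists_polynomial_integral_abs_sub_le {ν : Measure I} [IsFiniteMeasure ν] {f : I → ℝ}
    (hf : Integrable f ν) {ε : ℝ} (hε : 0 < ε) :
    ∃ p : ℝ[X], ∫ s, |f s - p.eval (s : ℝ)| ∂ν ≤ ε := by
  obtain ⟨g, -, hg, hgc, hgi⟩ := hf.exists_hasCompactSupport_integral_sub_le (half_pos hε)
  set δ := ε / (2 * (ν.real Set.univ + 1))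
  have hδ : 0 < δ := by positivity
  obtain ⟨p, hp⟩ := exists_polynomial_near_continuousMap 0 1 ⟨g, hgc⟩ δ hδ
  have hpδ (s : I) : |g s - p.eval (s : ℝ)| ≤ δ := by
    rw [abs_sub_comm]
    exact (ContinuousMap.norm_coe_le_norm _ s).trans hp.le
  have hgp : ∫ s, |g s - p.eval (s : ℝ)| ∂ν ≤ ε / 2 := calc
    _ ≤ δ * ν.real Set.univ := by
      refine (Real.le_norm_self _).trans
        (norm_integral_le_of_norm_le_const (.of_forall fun s => ?_))
      exact (abs_abs _).trans_le (hpδ s)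
    _ ≤ δ * (ν.real Set.univ + 1) := by gcongr; linarith
    _ = ε / 2 := by simp only [δ]; field_simp
  have hpi : Integrable (fun s : I => p.eval (s : ℝ)) ν :=
    (BoundedMeasurable.of_continuous (by fun_prop)).integrable
  refine ⟨p, ?_⟩
  calc ∫ s, |f s - p.eval (s : ℝ)| ∂ν
      ≤ ∫ s, (|f s - g s| + |g s - p.eval (s : ℝ)|) ∂ν :=
        integral_mono (hf.sub hpi).abs ((hf.sub hgi).abs.add (hgi.sub hpi).abs)
          fun s => abs_sub_le _ _ _
    _ = ∫ s, |f s - g s| ∂ν + ∫ s, |g s - p.eval (s : ℝ)| ∂ν :=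
        integral_add (hf.sub hgi).abs (hgi.sub hpi).abs
    _ ≤ ε / 2 + ε / 2 := add_le_add hg hgp
    _ = ε := add_halves ε

variable {Ω : Type*} [MeasurableSpace Ω] {μ : Measure Ω} [IsFiniteMeasure μ]

lemma integral_mul_comp_eq_zero_of_forall_pow {v : Ω → ℝ} (hv : BoundedMeasurable v) {φ : Ω → I}
    (hφ : Measurable φ) (h : ∀ n : ℕ, ∫ z, v z * (φ z : ℝ) ^ n ∂μ = 0)
    {f : I → ℝ} (hf : BoundedMeasurable f) : ∫ z, v z * f (φ z) ∂μ = 0 := by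
  have hcoe : BoundedMeasurable ((↑) : I → ℝ) := .of_continuous continuous_subtype_val
  have hpoly (p : ℝ[X]) : ∫ z, v z * p.eval (φ z : ℝ) ∂μ = 0 := by
    simp only [eval_eq_sum_range, Finset.mul_sum, mul_left_comm _ (p.coeff _)]
    rw [integral_finsetSum _ fun n _ => (hv.mul ((hcoe.comp hφ).pow n)).integrable.const_mul _]
    simp only [integral_const_mul, h, mul_zero, Finset.sum_const_zero]
  obtain ⟨C, hC⟩ := hv.bounded
  refine abs_nonpos_iff.1 (le_of_forall_pos_le_add fun ε hε => ?_)
  have hC1 : 0 < |C| + 1 := by positivity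
  obtain ⟨p, hp⟩ :=
    exists_polynomial_integral_abs_sub_le (hf.integrable (μ := μ.map φ)) (div_pos hε hC1)
  have hpb : BoundedMeasurable fun s : I => p.eval (s : ℝ) := .of_continuous (by fun_prop)
  have hdiff : BoundedMeasurable fun s : I => |f s - p.eval (s : ℝ)| := by fun_prop
  rw [integral_map hφ.aemeasurable hdiff.measurable.aestronglyMeasurable] at hp
  calc |∫ z, v z * f (φ z) ∂μ|
      = |∫ z, v z * (f (φ z) - p.eval (φ z : ℝ)) ∂μ| := by
        simp only [mul_sub]
        rw [integral_sub (BoundedMeasurable.integrable (by fun_prop))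
          (hv.mul (hpb.comp hφ)).integrable, hpoly, sub_zero]
    _ ≤ ∫ z, |v z * (f (φ z) - p.eval (φ z : ℝ))| ∂μ := abs_integral_le_integral_abs
    _ ≤ ∫ z, (|C| + 1) * |f (φ z) - p.eval (φ z : ℝ)| ∂μ := by
        refine integral_mono (hv.mul ((hf.sub hpb).comp hφ)).abs.integrable
          ((hdiff.comp hφ).integrable.const_mul _) fun z => ?_
        simp only [abs_mul]
        gcongr
        linarith [hC z, le_abs_self C]
    _ ≤ 0 + ε := by
        rw [integral_const_mul, zero_add]
        exact (le_div_iff₀' hC1).1 hp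

end PolynomialDensity

section HalfGraphon

/-- The half-graphon `W_h` as a kernel on the probability space `I = [0, 1]`. -/
def halfGraphon (x y : I) : ℝ :=
  if (x : ℝ) + y ≤ 1 then 1 else 0

lemma halfGraphon_comm (x y : I) : halfGraphon x y = halfGraphon y x := by
  simp only [halfGraphon, add_comm]

@[fun_prop]
lemma boundedMeasurable_halfGraphon : BoundedMeasurable (uncurry halfGraphon) :=
  .ite (measurableSet_le (by fun_prop) measurable_const)

lemma kernelOp_halfGraphon (f : ℝ → ℝ) (a : I) :
    kernelOp volume halfGraphon (fun s => f s) a = ∫ s in (0 : ℝ)..1 - a, f s := by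
  have hIcc : Set.Icc (0 : ℝ) (1 - a) = Set.Icc 0 1 ∩ {s | (a : ℝ) + s ≤ 1} := by
    ext s
    simp only [Set.mem_Icc, Set.mem_inter_iff, Set.mem_ofPred_eq]
    constructor
    · rintro ⟨h0, h1⟩; exact ⟨⟨h0, by linarith [a.2.1]⟩, by linarith⟩
    · rintro ⟨⟨h0, -⟩, h1⟩; exact ⟨h0, by linarith⟩
  rw [intervalIntegral.integral_of_le (by linarith [a.2.2]), ← integral_Icc_eq_integral_Ioc, hIcc,
    ← setIntegral_indicator (measurableSet_le (by fun_prop) measurable_const),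
    ← integral_subtype measurableSet_Icc]
  refine integral_congr_ae (.of_forall fun s => ?_)
  simp only [halfGraphon, Set.indicator_apply, Set.mem_ofPred_eq, ite_mul, one_mul, zero_mul]

lemma integral_halfGraphon (a : I) : ∫ z, halfGraphon a z = 1 - a := by
  simpa [kernelOp] using kernelOp_halfGraphon (fun _ => 1) a

lemma kernelComp_halfGraphon_self (a b : I) :
    kernelComp volume halfGraphon halfGraphon a b = min (1 - a : ℝ) (1 - b) := by
  have hmul (z : I) : halfGraphon a z * halfGraphon z b = halfGraphon (a ⊔ b) z := by
    have hle : ((a ⊔ b : I) : ℝ) + z ≤ 1 ↔ (a : ℝ) + z ≤ 1 ∧ (z : ℝ) + b ≤ 1 := by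
      simp only [add_comm (z : ℝ), ← le_sub_iff_add_le, ← sup_le_iff]; rfl
    simp only [halfGraphon, hle, ite_and, ite_mul, one_mul, zero_mul]
  simp only [kernelComp, hmul, integral_halfGraphon, min_sub_sub_left]
  rfl

lemma eval_eq_sub_kernelOp_halfGraphon (p : ℝ[X]) (a : I) :
    p.eval (a : ℝ) = p.eval 1 -
      kernelOp volume halfGraphon (fun s => (derivative p).eval (1 - s : ℝ)) a := by
  rw [kernelOp_halfGraphon fun s => (derivative p).eval (1 - s),
    intervalIntegral.integral_comp_sub_left fun s => (derivative p).eval s,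
    intervalIntegral.integral_eq_sub_of_hasDerivAt (fun s _ => p.hasDerivAt s)
      (Continuous.intervalIntegrable (by fun_prop) _ _)]
  simp

end HalfGraphon

section Intertwining

variable {α β : Type*} [MeasurableSpace α] [MeasurableSpace β] {μ : Measure α} {ν : Measure β}
  {U : α → α → ℝ} {K : β → β → ℝ} {φ : α → β} {f g : β → ℝ}

lemma BoundedMeasurable.integral_comp (hf : BoundedMeasurable f) (hφ : MeasurePreserving φ μ ν) :
    ∫ x, f (φ x) ∂μ = ∫ y, f y ∂ν := by
  rw [← hφ.map_eq, integral_map hφ.aemeasurable hf.measurable.aestronglyMeasurable]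

variable [IsFiniteMeasure μ]

lemma integral_sub_mul_comp (hU : BoundedMeasurable (uncurry U))
    (hK : BoundedMeasurable (uncurry K)) (hφ : MeasurePreserving φ μ ν)
    (hf : BoundedMeasurable f) (x : α) :
    ∫ z, (U x z - K (φ x) (φ z)) * f (φ z) ∂μ =
      kernelOp μ U (f ∘ φ) x - kernelOp ν K f (φ x) := by
  have hφm := hφ.measurable
  have hKf : BoundedMeasurable fun t => K (φ x) t * f t := by fun_prop
  simp only [sub_mul]
  rw [integral_sub (BoundedMeasurable.integrable (by fun_prop))
    (hKf.comp hφm).integrable, hKf.integral_comp hφ]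
  rfl

theorem ae_eq_comp_of_kernelComp_eq (hU : BoundedMeasurable (uncurry U))
    (hK : BoundedMeasurable (uncurry K)) (hUsymm : ∀ x y, U x y = U y x)
    (hKsymm : ∀ x y, K x y = K y x) (hφ : MeasurePreserving φ μ ν)
    (hUU : ∀ᵐ p ∂(μ.prod μ), kernelComp μ U U p.1 p.2 = kernelComp ν K K (φ p.1) (φ p.2))
    (hUK : ∀ᵐ x ∂μ, ∀ b, kernelComp μ U (fun z => K (φ z)) x b = kernelComp ν K K (φ x) b) :
    ∀ᵐ p ∂(μ.prod μ), U p.1 p.2 = K (φ p.1) (φ p.2) := by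
  have hφm := hφ.measurable
  set V : α → α → ℝ := fun x y => U x y - K (φ x) (φ y)
  have hV : BoundedMeasurable (uncurry V) := by simp only [V, uncurry_def]; fun_prop
  have hVsymm (x y : α) : V x y = V y x := by simp only [V, hUsymm x, hKsymm (φ x)]
  have hVK : ∀ᵐ x ∂μ, ∀ b, ∫ z, V x z * K (φ z) b ∂μ = 0 := by
    filter_upwards [hUK] with x hx b
    rw [integral_sub_mul_comp hU hK hφ (f := fun t => K t b) (by fun_prop)]
    exact sub_eq_zero.2 (hx b)
  have hVV : ∀ᵐ p ∂(μ.prod μ), kernelComp μ V V p.1 p.2 = 0 := by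
    filter_upwards [hUU, Measure.quasiMeasurePreserving_fst.ae hVK,
      Measure.quasiMeasurePreserving_snd.ae hVK] with ⟨x, y⟩ hxy hx hy
    have hKK : ∫ z, K (φ x) (φ z) * K (φ z) (φ y) ∂μ = kernelComp ν K K (φ x) (φ y) :=
      BoundedMeasurable.integral_comp (f := fun t => K (φ x) t * K t (φ y)) (by fun_prop) hφ
    have hexpand (z : α) : V x z * V z y = (U x z * U z y - K (φ x) (φ z) * K (φ z) (φ y)) -
        (V x z * K (φ z) (φ y) + V y z * K (φ z) (φ x)) := by
      rw [hVsymm y z, hKsymm (φ z) (φ x)]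
      simp only [V]
      ring
    simp only [kernelComp, hexpand]
    rw [integral_sub (BoundedMeasurable.integrable (by fun_prop))
        (BoundedMeasurable.integrable (by fun_prop)),
      integral_sub (BoundedMeasurable.integrable (by fun_prop))
        (BoundedMeasurable.integrable (by fun_prop)),
      integral_add (BoundedMeasurable.integrable (by fun_prop))
        (BoundedMeasurable.integrable (by fun_prop)),
      hx, hy, hKK, ← hxy, kernelComp, sub_self, add_zero, sub_zero]
  filter_upwards [ae_eq_zero_of_kernelComp_self hV hVsymm hVV] with p hp
  exact sub_eq_zero.1 hp

/-- Pulling `f` back along `φ` commutes with the operators of `U` and `K`: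
`T_U (f ∘ φ) = (T_K f) ∘ φ` almost everywhere. -/
def Intertwines (μ : Measure α) (ν : Measure β) (U : α → α → ℝ) (K : β → β → ℝ) (φ : α → β)
    (f : β → ℝ) : Prop :=
  ∀ᵐ x ∂μ, kernelOp μ U (f ∘ φ) x = kernelOp ν K f (φ x)

variable [IsFiniteMeasure ν]

lemma kernelOp_sub (hK : BoundedMeasurable (uncurry K)) (hf : BoundedMeasurable f)
    (hg : BoundedMeasurable g) (y : β) :
    kernelOp ν K (f - g) y = kernelOp ν K f y - kernelOp ν K g y := by
  simp only [kernelOp, Pi.sub_apply, mul_sub]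
  exact integral_sub (BoundedMeasurable.integrable (by fun_prop))
    (BoundedMeasurable.integrable (by fun_prop))

lemma Intertwines.sub (hU : BoundedMeasurable (uncurry U)) (hK : BoundedMeasurable (uncurry K))
    (hφ : Measurable φ) (hf : BoundedMeasurable f) (hg : BoundedMeasurable g)
    (hfi : Intertwines μ ν U K φ f) (hgi : Intertwines μ ν U K φ g) :
    Intertwines μ ν U K φ (f - g) := by
  filter_upwards [hfi, hgi] with x hfx hgx
  rw [kernelOp_sub hK hf hg, ← hfx, ← hgx]
  exact kernelOp_sub hU (hf.comp hφ) (hg.comp hφ) x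

lemma Intertwines.comp_kernelOp (hU : BoundedMeasurable (uncurry U))
    (hK : BoundedMeasurable (uncurry K)) (hφ : MeasurePreserving φ μ ν)
    (hUU : ∀ᵐ p ∂(μ.prod μ), kernelComp μ U U p.1 p.2 = kernelComp ν K K (φ p.1) (φ p.2))
    (hf : BoundedMeasurable f) (hfi : Intertwines μ ν U K φ f) :
    Intertwines μ ν U K φ (kernelOp ν K f) := by
  filter_upwards [Measure.ae_ae_of_ae_prod hUU] with x hx
  have hKKf : BoundedMeasurable fun t => kernelComp ν K K (φ x) t * f t := by
    unfold kernelComp; fun_prop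
  calc kernelOp μ U (kernelOp ν K f ∘ φ) x
      = kernelOp μ U (kernelOp μ U (f ∘ φ)) x :=
        integral_congr_ae (hfi.mono fun z hz => by simp only [hz, comp_apply])
    _ = kernelOp μ (kernelComp μ U U) (f ∘ φ) x :=
        kernelOp_kernelOp hU hU (hf.comp hφ.measurable) x
    _ = ∫ z, kernelComp ν K K (φ x) (φ z) * f (φ z) ∂μ :=
        integral_congr_ae (hx.mono fun z hz => by simp only [hz, comp_apply])
    _ = kernelOp ν (kernelComp ν K K) f (φ x) := hKKf.integral_comp hφ
    _ = kernelOp ν K (kernelOp ν K f) (φ x) := (kernelOp_kernelOp hK hK hf _).symm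

end Intertwining

section HalfGraphonPullback

variable {Ω : Type*} [MeasurableSpace Ω] {μ : Measure Ω} [IsFiniteMeasure μ] {U : Ω → Ω → ℝ}
  {φ : Ω → I}

lemma intertwines_halfGraphon_polynomial (hU : BoundedMeasurable (uncurry U))
    (hφ : MeasurePreserving φ μ volume) (hdeg : ∀ᵐ x ∂μ, ∫ z, U x z ∂μ = 1 - φ x)
    (hUU : ∀ᵐ p ∂(μ.prod μ), kernelComp μ U U p.1 p.2 =
      kernelComp volume halfGraphon halfGraphon (φ p.1) (φ p.2)) (p : ℝ[X]) :
    Intertwines μ volume U halfGraphon φ fun s => p.eval (s : ℝ) := by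
  have hconst (c : ℝ) : Intertwines μ volume U halfGraphon φ fun _ => c := by
    filter_upwards [hdeg] with x hx
    simp only [kernelOp, integral_mul_const, comp_def, hx, integral_halfGraphon]
  have hcont (p : ℝ[X]) : BoundedMeasurable fun s : I => p.eval (s : ℝ) :=
    .of_continuous (by fun_prop)
  induction hn : p.natDegree using Nat.strong_induction_on generalizing p with
  | _ n ih =>
    by_cases hp : p.natDegree = 0
    · rw [eq_C_of_natDegree_eq_zero hp]
      simpa only [eval_C] using hconst _
    · set q : ℝ[X] := (derivative p).comp (1 - X)
      have hq : q.natDegree < n := by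
        have hlin : (1 - X : ℝ[X]).natDegree ≤ 1 := by compute_degree
        calc q.natDegree ≤ (derivative p).natDegree * (1 - X : ℝ[X]).natDegree :=
              natDegree_comp_le
          _ ≤ (derivative p).natDegree := mul_le_of_le_one_right' hlin
          _ < n := hn ▸ natDegree_derivative_lt hp
      have hpq : (fun s : I => p.eval (s : ℝ)) =
          (fun _ => p.eval 1) - kernelOp volume halfGraphon fun s : I => q.eval (s : ℝ) := by
        ext s
        simpa [q] using eval_eq_sub_kernelOp_halfGraphon p s
      rw [hpq]
      exact (hconst _).sub hU boundedMeasurable_halfGraphon hφ.measurable (by fun_prop)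
        (boundedMeasurable_halfGraphon.kernelOp (hcont q))
        ((ih _ hq q rfl).comp_kernelOp hU boundedMeasurable_halfGraphon hφ hUU (hcont q))

theorem ae_eq_halfGraphon_comp (hU : BoundedMeasurable (uncurry U))
    (hsymm : ∀ x y, U x y = U y x)
    (hφ : MeasurePreserving φ μ volume) (hdeg : ∀ᵐ x ∂μ, ∫ z, U x z ∂μ = 1 - φ x)
    (hUU : ∀ᵐ p ∂(μ.prod μ), kernelComp μ U U p.1 p.2 =
      kernelComp volume halfGraphon halfGraphon (φ p.1) (φ p.2)) :
    ∀ᵐ p ∂(μ.prod μ), U p.1 p.2 = halfGraphon (φ p.1) (φ p.2) := by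
  have hφm := hφ.measurable
  refine ae_eq_comp_of_kernelComp_eq hU boundedMeasurable_halfGraphon hsymm halfGraphon_comm hφ
    hUU ?_
  have hpow : ∀ᵐ x ∂μ, ∀ n : ℕ,
      ∫ z, (U x z - halfGraphon (φ x) (φ z)) * (φ z : ℝ) ^ n ∂μ = 0 := by
    refine ae_all_iff.2 fun n => ?_
    have hn : BoundedMeasurable fun s : I => (s : ℝ) ^ n := .of_continuous (by fun_prop)
    have hint := intertwines_halfGraphon_polynomial hU hφ hdeg hUU (X ^ n)
    simp only [eval_pow, eval_X] at hint
    filter_upwards [hint] with x hx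
    rw [integral_sub_mul_comp hU boundedMeasurable_halfGraphon hφ hn, hx, sub_self]
  filter_upwards [hpow] with x hx b
  have hb : BoundedMeasurable fun s => halfGraphon s b := by fun_prop
  rw [← sub_eq_zero, ← integral_mul_comp_eq_zero_of_forall_pow (by fun_prop) hφm hx hb,
    integral_sub_mul_comp hU boundedMeasurable_halfGraphon hφ hb]
  rfl

end HalfGraphonPullback

section Cramer

lemma integral_integral_integral_mul {α β γ : Type*} [MeasurableSpace α] [MeasurableSpace β]
    [MeasurableSpace γ] {μ : Measure α} {ν : Measure β} {κ : Measure γ} [IsFiniteMeasure μ]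
    [IsFiniteMeasure ν] [IsFiniteMeasure κ] {A : γ → α → ℝ} {B : γ → β → ℝ}
    (hA : BoundedMeasurable (uncurry A)) (hB : BoundedMeasurable (uncurry B)) :
    ∫ x, ∫ y, ∫ t, A t x * B t y ∂κ ∂ν ∂μ = ∫ t, (∫ x, A t x ∂μ) * ∫ y, B t y ∂ν ∂κ := by
  calc ∫ x, ∫ y, ∫ t, A t x * B t y ∂κ ∂ν ∂μ
      = ∫ x, ∫ t, A t x * ∫ y, B t y ∂ν ∂κ ∂μ := by
        congr! 2 with x
        rw [integral_integral_swap (BoundedMeasurable.integrable (by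
          simp only [uncurry_def]; fun_prop))]
        simp only [integral_const_mul]
    _ = ∫ t, (∫ x, A t x ∂μ) * ∫ y, B t y ∂ν ∂κ := by
        rw [integral_integral_swap (BoundedMeasurable.integrable (by
          simp only [uncurry_def]; fun_prop))]
        simp only [integral_mul_const]

lemma measure_eq_of_ae_Ici_eq {ρ τ : Measure ℝ} [IsFiniteMeasure ρ] [IsFiniteMeasure τ]
    (h : ∀ᵐ t, ρ.real (Set.Ici t) = τ.real (Set.Ici t)) : ρ = τ := by
  refine Measure.ext_of_Ici _ _ fun a => ?_
  obtain ⟨u, humono, hu, hlim⟩ := (Measure.dense_of_ae h).exists_seq_strictMono_tendsto a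
  have hIci : ⋂ n, Set.Ici (u n) = Set.Ici a := by
    ext t
    simp only [Set.mem_iInter, Set.mem_Ici]
    exact ⟨fun ht => le_of_tendsto' hlim ht, fun ht n => (hu n).1.le.trans ht⟩
  have htendsto (κ : Measure ℝ) [IsFiniteMeasure κ] :
      Filter.Tendsto (fun n => κ (Set.Ici (u n))) Filter.atTop (nhds (κ (Set.Ici a))) := by
    rw [← hIci]
    exact tendsto_measure_iInter_atTop (fun n => measurableSet_Ici.nullMeasurableSet)
      (fun m n hmn => Set.Ici_subset_Ici.2 (humono.monotone hmn)) ⟨0, measure_ne_top _ _⟩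
  refine tendsto_nhds_unique (htendsto ρ) ((htendsto τ).congr fun n => ?_)
  exact ((measureReal_eq_measureReal_iff).1 (hu n).2).symm

variable {α β : Type*} [MeasurableSpace α] [MeasurableSpace β] {μ : Measure α} {ν : Measure β}
  {X : α → ℝ} {Y : β → ℝ} {a b : ℝ}

/-- The survival function `t ↦ μ(t ≤ X)` of a random variable `X`. -/
def survival (μ : Measure α) (X : α → ℝ) (t : ℝ) : ℝ :=
  ∫ x, if t ≤ X x then 1 else 0 ∂μ

lemma boundedMeasurable_le (hX : Measurable X) :
    BoundedMeasurable (uncurry fun (t : ℝ) (x : α) => if t ≤ X x then (1 : ℝ) else 0) :=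
  .ite (measurableSet_le (by fun_prop) (by fun_prop))

lemma survival_eq_map_real (hX : Measurable X) (t : ℝ) :
    survival μ X t = (μ.map X).real (Set.Ici t) := by
  rw [map_measureReal_apply hX measurableSet_Ici,
    ← integral_indicator_one (hX measurableSet_Ici)]
  rfl

lemma survival_of_le [IsProbabilityMeasure μ] (hXa : ∀ x, a ≤ X x) {t : ℝ} (ht : t ≤ a) :
    survival μ X t = 1 := by
  simp [survival, fun x => ht.trans (hXa x)]

lemma survival_of_lt (hXb : ∀ x, X x ≤ b) {t : ℝ} (ht : b < t) : survival μ X t = 0 := by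
  simp [survival, fun x => ((hXb x).trans_lt ht).not_ge]

lemma setIntegral_le_mul_le {u v : ℝ} (hu : u ∈ Set.Icc a b) (hv : v ∈ Set.Icc a b) :
    ∫ t in Set.Icc a b, (if t ≤ u then (1 : ℝ) else 0) * (if t ≤ v then 1 else 0) =
      min u v - a := by
  have hmul (t : ℝ) : (if t ≤ u then (1 : ℝ) else 0) * (if t ≤ v then 1 else 0) =
      (Set.Iic (min u v)).indicator 1 t := by
    simp only [Set.indicator_apply, Set.mem_Iic, le_min_iff, ite_and, ite_mul, one_mul, zero_mul,
      Pi.one_apply]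
  have hinter : Set.Icc a b ∩ Set.Iic (min u v) = Set.Icc a (min u v) := by
    rw [← Set.Ici_inter_Iic, Set.inter_assoc, Set.Iic_inter_Iic,
      inf_eq_right.2 (min_le_of_left_le hu.2), Set.Ici_inter_Iic]
  simp only [hmul]
  rw [setIntegral_indicator measurableSet_Iic, hinter]
  simp [le_min hu.1 hv.1]

variable [IsProbabilityMeasure μ] [IsProbabilityMeasure ν]

lemma integral_integral_min (hX : Measurable X) (hY : Measurable Y)
    (hXab : ∀ x, X x ∈ Set.Icc a b) (hYab : ∀ y, Y y ∈ Set.Icc a b) :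
    ∫ x, ∫ y, min (X x) (Y y) ∂ν ∂μ =
      a + ∫ t in Set.Icc a b, survival μ X t * survival ν Y t := by
  have hXb : BoundedMeasurable X := ⟨hX, _, fun x => abs_le_max_abs_abs (hXab x).1 (hXab x).2⟩
  have hYb : BoundedMeasurable Y := ⟨hY, _, fun y => abs_le_max_abs_abs (hYab y).1 (hYab y).2⟩
  unfold survival
  rw [← integral_integral_integral_mul (boundedMeasurable_le hX) (boundedMeasurable_le hY)]
  simp only [setIntegral_le_mul_le (hXab _) (hYab _)]
  have hsub (x : α) : ∫ y, (min (X x) (Y y) - a) ∂ν = ∫ y, min (X x) (Y y) ∂ν - a := by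
    rw [integral_sub (BoundedMeasurable.integrable (by fun_prop)) (integrable_const _),
      integral_const, probReal_univ, one_smul]
  simp only [hsub]
  rw [integral_sub (BoundedMeasurable.integrable (by fun_prop)) (integrable_const _),
    integral_const, probReal_univ, one_smul, add_sub_cancel]

lemma setIntegral_survival_sub_sq (hX : Measurable X) (hY : Measurable Y)
    (hXab : ∀ x, X x ∈ Set.Icc a b) (hYab : ∀ y, Y y ∈ Set.Icc a b) :
    ∫ t in Set.Icc a b, (survival μ X t - survival ν Y t) ^ 2 =
      ∫ x, ∫ x', min (X x) (X x') ∂μ ∂μ + ∫ y, ∫ y', min (Y y) (Y y') ∂ν ∂ν -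
        2 * ∫ x, ∫ y, min (X x) (Y y) ∂ν ∂μ := by
  have hSX : BoundedMeasurable (survival μ X) := (boundedMeasurable_le hX).integral
  have hSY : BoundedMeasurable (survival ν Y) := (boundedMeasurable_le hY).integral
  have hexpand (t : ℝ) : (survival μ X t - survival ν Y t) ^ 2 =
      survival μ X t * survival μ X t + survival ν Y t * survival ν Y t -
        2 * (survival μ X t * survival ν Y t) := by ring
  simp only [hexpand]
  rw [integral_sub (BoundedMeasurable.integrable (by fun_prop))
      (BoundedMeasurable.integrable (by fun_prop)),
    integral_add (BoundedMeasurable.integrable (by fun_prop))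
      (BoundedMeasurable.integrable (by fun_prop)), integral_const_mul,
    integral_integral_min hX hX hXab hXab, integral_integral_min hY hY hYab hYab,
    integral_integral_min hX hY hXab hYab]
  ring

theorem map_eq_map_of_integral_min_le (hX : BoundedMeasurable X) (hY : BoundedMeasurable Y)
    (h : ∫ x, ∫ x', min (X x) (X x') ∂μ ∂μ + ∫ y, ∫ y', min (Y y) (Y y') ∂ν ∂ν ≤
      2 * ∫ x, ∫ y, min (X x) (Y y) ∂ν ∂μ) : μ.map X = ν.map Y := by
  obtain ⟨hXm, C, hC⟩ := hX
  obtain ⟨hYm, C', hC'⟩ := hY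
  set M := max C C'
  have hXM (x : α) : X x ∈ Set.Icc (-M) M := abs_le.1 ((hC x).trans (le_max_left _ _))
  have hYM (y : β) : Y y ∈ Set.Icc (-M) M := abs_le.1 ((hC' y).trans (le_max_right _ _))
  have hSX : BoundedMeasurable (survival μ X) := (boundedMeasurable_le hXm).integral
  have hSY : BoundedMeasurable (survival ν Y) := (boundedMeasurable_le hYm).integral
  have hsq : BoundedMeasurable fun t => (survival μ X t - survival ν Y t) ^ 2 := by fun_prop
  have hdist : ∫ t in Set.Icc (-M) M, (survival μ X t - survival ν Y t) ^ 2 = 0 := by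
    refine le_antisymm ?_ (integral_nonneg fun t => sq_nonneg _)
    rw [setIntegral_survival_sub_sq hXm hYm hXM hYM]
    exact sub_nonpos.2 h
  have hae := (integral_eq_zero_iff_of_nonneg (fun t => sq_nonneg _) hsq.integrable).1 hdist
  have := Measure.isProbabilityMeasure_map (μ := μ) hXm.aemeasurable
  have := Measure.isProbabilityMeasure_map (μ := ν) hYm.aemeasurable
  refine measure_eq_of_ae_Ici_eq ?_
  filter_upwards [(ae_restrict_iff' measurableSet_Icc).1 hae] with t ht
  rw [← survival_eq_map_real hXm, ← survival_eq_map_real hYm]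
  rcases le_or_gt t (-M) with htl | htl
  · rw [survival_of_le (fun x => (hXM x).1) htl, survival_of_le (fun y => (hYM y).1) htl]
  rcases lt_or_ge M t with htr | htr
  · rw [survival_of_lt (fun x => (hXM x).2) htr, survival_of_lt (fun y => (hYM y).2) htr]
  · exact sub_eq_zero.1 (pow_eq_zero_iff two_ne_zero |>.1 (ht ⟨htl.le, htr⟩))

end Cramer

section UniformLaw

lemma integral_coe_unitInterval (f : ℝ → ℝ) : ∫ s : I, f s = ∫ s in (0 : ℝ)..1, f s := by
  rw [intervalIntegral.integral_of_le zero_le_one, ← integral_Icc_eq_integral_Ioc,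
    ← integral_subtype measurableSet_Icc]

lemma integral_min_coe {d : ℝ} (hd : d ∈ Set.Icc (0 : ℝ) 1) :
    ∫ s : I, min d s = d - d ^ 2 / 2 := by
  have hint (a b : ℝ) : IntervalIntegrable (fun s => min d s) volume a b :=
    Continuous.intervalIntegrable (by fun_prop) _ _
  have hleft : ∫ s in (0 : ℝ)..d, min d s = ∫ s in (0 : ℝ)..d, s :=
    intervalIntegral.integral_congr fun s hs =>
      min_eq_right (Set.uIcc_of_le hd.1 ▸ hs : s ∈ Set.Icc 0 d).2
  have hright : ∫ s in d..1, min d s = ∫ _ in d..1, d :=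
    intervalIntegral.integral_congr fun s hs =>
      min_eq_left (Set.uIcc_of_le hd.2 ▸ hs : s ∈ Set.Icc d 1).1
  rw [integral_coe_unitInterval fun s => min d s,
    ← intervalIntegral.integral_add_adjacent_intervals (hint 0 d) (hint d 1), hleft, hright,
    integral_id, intervalIntegral.integral_const, smul_eq_mul]
  ring

lemma integral_integral_min_coe : ∫ s : I, ∫ t : I, min (s : ℝ) t = 1 / 3 := by
  simp only [fun s : I => integral_min_coe s.2]
  rw [integral_coe_unitInterval fun s => s - s ^ 2 / 2, intervalIntegral.integral_sub
    (Continuous.intervalIntegrable (by fun_prop) _ _)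
    (Continuous.intervalIntegrable (by fun_prop) _ _), integral_id,
    intervalIntegral.integral_div, integral_pow]
  norm_num

lemma sub_sq_div_two_le_integral_min (d : ℝ) : d - d ^ 2 / 2 ≤ ∫ s : I, min d s := by
  rcases le_total d 0 with hd0 | hd0
  · have hmin (s : I) : min d (s : ℝ) = d := min_eq_left (hd0.trans s.2.1)
    simp only [hmin, integral_const, probReal_univ, one_smul]
    linarith [sq_nonneg d]
  rcases le_total d 1 with hd1 | hd1
  · exact (integral_min_coe ⟨hd0, hd1⟩).ge
  · have hmin (s : I) : min d (s : ℝ) = min 1 (s : ℝ) := by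
      rw [min_eq_right (s.2.2.trans hd1), min_eq_right s.2.2]
    simp only [hmin, integral_min_coe ⟨zero_le_one, le_rfl⟩]
    linarith [sq_nonneg (d - 1)]

variable {α : Type*} [MeasurableSpace α] {μ : Measure α} {D : α → ℝ}

lemma boundedMeasurable_coe : BoundedMeasurable fun s : I => (s : ℝ) :=
  .of_continuous continuous_subtype_val

theorem map_eq_map_coe_of_moments [IsProbabilityMeasure μ] (hD : BoundedMeasurable D)
    (hD1 : ∫ x, D x ∂μ = 1 / 2) (hD2 : ∫ x, D x ^ 2 ∂μ = 1 / 3)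
    (hmin : ∫ x, ∫ y, min (D x) (D y) ∂μ ∂μ ≤ 1 / 3) :
    μ.map D = volume.map fun s : I => (s : ℝ) := by
  have hcoe := boundedMeasurable_coe
  refine map_eq_map_of_integral_min_le hD hcoe ?_
  have hmixed : 1 / 3 ≤ ∫ x, (∫ s : I, min (D x) s) ∂μ := by
    calc (1 / 3 : ℝ) = ∫ x, (D x - D x ^ 2 / 2) ∂μ := by
          rw [integral_sub hD.integrable ((hD.pow 2).integrable.div_const 2), integral_div, hD1,
            hD2]
          norm_num
      _ ≤ ∫ x, (∫ s : I, min (D x) s) ∂μ :=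
          integral_mono (hD.integrable.sub ((hD.pow 2).integrable.div_const 2))
            (BoundedMeasurable.integrable (by fun_prop))
            fun x => sub_sq_div_two_le_integral_min (D x)
  linarith [integral_integral_min_coe]

lemma exists_measurePreserving_of_map_eq_map_coe (hD : Measurable D)
    (h : μ.map D = volume.map fun s : I => (s : ℝ)) :
    ∃ ψ : α → I, MeasurePreserving ψ μ volume ∧ ∀ᵐ x ∂μ, D x = ψ x := by
  have hproj : Measurable (Set.projIcc (0 : ℝ) 1 zero_le_one) := continuous_projIcc.measurable
  refine ⟨fun x => Set.projIcc 0 1 zero_le_one (D x), ⟨hproj.comp hD, ?_⟩, ?_⟩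
  · rw [← Function.comp_def, ← Measure.map_map hproj hD, h,
      Measure.map_map hproj measurable_subtype_coe]
    simp [Function.comp_def]
  · have hmem : ∀ᵐ t ∂μ.map D, t ∈ Set.Icc (0 : ℝ) 1 := by
      rw [h]
      exact (ae_map_iff measurable_subtype_coe.aemeasurable measurableSet_Icc).2
        (.of_forall fun s => s.2)
    filter_upwards [ae_of_ae_map hD.aemeasurable hmem] with x hx
    rw [Set.projIcc_of_mem _ hx]

theorem exists_measurePreserving_of_min_le [IsProbabilityMeasure μ] {c : α → α → ℝ}
    (hD : BoundedMeasurable D) (hc : BoundedMeasurable (uncurry c))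
    (hD1 : ∫ x, D x ∂μ = 1 / 2) (hD2 : ∫ x, D x ^ 2 ∂μ = 1 / 3)
    (hc1 : ∫ x, ∫ y, c x y ∂μ ∂μ = 1 / 3)
    (hmin : ∀ᵐ p ∂μ.prod μ, min (D p.1) (D p.2) ≤ c p.1 p.2) :
    ∃ ψ : α → I, MeasurePreserving ψ μ volume ∧ (∀ᵐ x ∂μ, D x = ψ x) ∧
      ∀ᵐ p ∂μ.prod μ, c p.1 p.2 = min (ψ p.1 : ℝ) (ψ p.2) := by
  have hDD : BoundedMeasurable fun p : α × α => min (D p.1) (D p.2) := by fun_prop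
  have hcp : Integrable (fun p : α × α => c p.1 p.2) (μ.prod μ) := hc.integrable
  have hcprod : ∫ p, c p.1 p.2 ∂μ.prod μ = 1 / 3 := by rw [← hc1, integral_prod _ hcp]
  have hle : ∫ x, ∫ y, min (D x) (D y) ∂μ ∂μ ≤ 1 / 3 := by
    rw [← hcprod, ← integral_prod _ hDD.integrable]
    exact integral_mono_ae hDD.integrable hcp hmin
  obtain ⟨ψ, hψ, hDψ⟩ := exists_measurePreserving_of_map_eq_map_coe hD.measurable
    (map_eq_map_coe_of_moments hD hD1 hD2 hle)
  have hDψ2 : ∀ᵐ p ∂μ.prod μ, min (D p.1) (D p.2) = min (ψ p.1 : ℝ) (ψ p.2) := by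
    filter_upwards [Measure.quasiMeasurePreserving_fst.ae hDψ,
      Measure.quasiMeasurePreserving_snd.ae hDψ] with p hp1 hp2
    rw [hp1, hp2]
  have hminI : BoundedMeasurable fun q : I × I => min (q.1 : ℝ) q.2 :=
    .of_continuous (by fun_prop)
  have hψmin : ∫ p, min (D p.1) (D p.2) ∂μ.prod μ = 1 / 3 := by
    rw [integral_congr_ae hDψ2, ← integral_integral_min_coe, ← integral_prod _ hminI.integrable]
    exact hminI.integral_comp (hψ.prod hψ)
  refine ⟨ψ, hψ, hDψ, ?_⟩
  have heq := (integral_eq_iff_of_ae_le hDD.integrable hcp hmin).1 (hψmin.trans hcprod.symm)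
  filter_upwards [heq, hDψ2] with p hp1 hp2
  rw [← hp1, hp2]

end UniformLaw

section Density

variable {α β : Type*} [MeasurableSpace α] [MeasurableSpace β] {μ : Measure α} {ν : Measure β}
  {U : α → α → ℝ} {W : β → β → ℝ} {n r : ℕ}

/-- The homomorphism density `t(F, U)` of a graph `F` in a kernel `U` on an arbitrary
probability space. -/
def density (μ : Measure α) (F : SimpleGraph (Fin n)) (U : α → α → ℝ) : ℝ :=
  ∫ x, ∏ p ∈ Finset.univ.filter (fun p : Fin n × Fin n => p.1 < p.2 ∧ F.Adj p.1 p.2),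
    U (x p.1) (x p.2) ∂Measure.pi fun _ => μ

lemma measurePreserving_eval_prodMk [IsProbabilityMeasure μ] {i j : Fin n} (hij : i ≠ j) :
    MeasurePreserving (fun x : Fin n → α => (x i, x j)) (Measure.pi fun _ => μ) (μ.prod μ) := by
  refine ⟨by fun_prop, ?_⟩
  have hindep := (ProbabilityTheory.iIndepFun_pi (μ := fun _ : Fin n => μ) (X := fun _ x => x)
    fun _ => aemeasurable_id).indepFun hij
  have heval (k : Fin n) := (measurePreserving_eval (fun _ : Fin n => μ) k).map_eq
  rw [(ProbabilityTheory.indepFun_iff_map_prod_eq_prod_map_map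
    (measurable_pi_apply i).aemeasurable (measurable_pi_apply j).aemeasurable).1 hindep]
  exact congrArg₂ Measure.prod (heval i) (heval j)

theorem density_eq_of_ae_eq_comp [IsProbabilityMeasure μ] [IsProbabilityMeasure ν] {φ : α → β}
    (hW : BoundedMeasurable (uncurry W)) (hφ : MeasurePreserving φ μ ν)
    (h : ∀ᵐ p ∂μ.prod μ, U p.1 p.2 = W (φ p.1) (φ p.2)) (F : SimpleGraph (Fin n)) :
    density μ F U = density ν F W := by
  have hedges : ∀ᵐ x ∂Measure.pi fun _ : Fin n => μ, ∀ p : Fin n × Fin n, p.1 ≠ p.2 →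
      U (x p.1) (x p.2) = W (φ (x p.1)) (φ (x p.2)) :=
    ae_all_iff.2 fun p => ae_all_iff.2 fun hp =>
      (measurePreserving_eval_prodMk hp).quasiMeasurePreserving.ae h
  have hWprod : BoundedMeasurable fun y : Fin n → β =>
      ∏ p ∈ Finset.univ.filter (fun p : Fin n × Fin n => p.1 < p.2 ∧ F.Adj p.1 p.2),
        W (y p.1) (y p.2) := by fun_prop
  unfold density
  rw [← hWprod.integral_comp (measurePreserving_pi (fun _ => μ) (fun _ => ν) fun _ => hφ)]
  refine integral_congr_ae (hedges.mono fun x hx => Finset.prod_congr rfl fun p hp => ?_)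
  exact hx p (Finset.mem_filter.1 hp).2.1.ne

lemma measurePreserving_append [SigmaFinite μ] :
    MeasurePreserving (fun q : (Fin r → α) × (Fin n → α) => Fin.append q.1 q.2)
      ((Measure.pi fun _ => μ).prod (Measure.pi fun _ => μ)) (Measure.pi fun _ => μ) := by
  have hmeas : Measurable fun q : (Fin r → α) × (Fin n → α) => Fin.append q.1 q.2 :=
    measurable_pi_iff.2 fun i => i.addCases (fun i => by simp only [Fin.append_left]; fun_prop)
      fun j => by simp only [Fin.append_right]; fun_prop
  refine ⟨hmeas, (Measure.pi_eq fun s hs => ?_).symm⟩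
  have hpre : (fun q : (Fin r → α) × (Fin n → α) => Fin.append q.1 q.2) ⁻¹' Set.univ.pi s =
      (Set.univ.pi fun i => s (Fin.castAdd n i)) ×ˢ Set.univ.pi fun j => s (Fin.natAdd r j) := by
    ext q
    simp [Fin.forall_fin_add]
  rw [Measure.map_apply hmeas (.univ_pi hs), hpre, Measure.prod_prod, Measure.pi_pi,
    Measure.pi_pi, Fin.prod_univ_add]

/-- The bipartite graph with parts `Fin r` and `Fin n` and edge set `T`, on the vertex set
`Fin (r + n)`. -/
def bipartiteGraph (T : Finset (Fin r × Fin n)) : SimpleGraph (Fin (r + n)) :=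
  .fromRel fun u v => ∃ p ∈ T, u = Fin.castAdd n p.1 ∧ v = Fin.natAdd r p.2

lemma density_bipartiteGraph (T : Finset (Fin r × Fin n)) :
    density μ (bipartiteGraph T) U =
      ∫ x, ∏ p ∈ T, U (x (Fin.castAdd n p.1)) (x (Fin.natAdd r p.2)) ∂Measure.pi fun _ => μ := by
  have hlt (p : Fin r × Fin n) : Fin.castAdd n p.1 < Fin.natAdd r p.2 :=
    p.1.2.trans_le (Nat.le_add_right r p.2)
  have hedges : Finset.univ.filter (fun q : Fin (r + n) × Fin (r + n) =>
      q.1 < q.2 ∧ (bipartiteGraph T).Adj q.1 q.2) =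
        T.image fun p => (Fin.castAdd n p.1, Fin.natAdd r p.2) := by
    ext ⟨u, v⟩
    simp only [Finset.mem_filter, Finset.mem_univ, true_and, Finset.mem_image, Prod.mk.injEq,
      bipartiteGraph, SimpleGraph.fromRel_adj]
    constructor
    · rintro ⟨huv, -, ⟨p, hp, rfl, rfl⟩ | ⟨p, -, rfl, rfl⟩⟩
      · exact ⟨p, hp, rfl, rfl⟩
      · exact absurd huv (hlt p).not_gt
    · rintro ⟨p, hp, rfl, rfl⟩
      exact ⟨hlt p, (hlt p).ne, .inl ⟨p, hp, rfl, rfl⟩⟩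
  unfold density
  rw [hedges]
  refine integral_congr_ae (.of_forall fun x => Finset.prod_image fun p _ q _ hpq => ?_)
  simpa [Prod.ext_iff] using hpq

variable [IsProbabilityMeasure μ] [IsProbabilityMeasure ν]

lemma integral_prod_affine (hU : BoundedMeasurable (uncurry U)) (a b : Fin r × Fin n → ℝ) :
    ∫ x, ∏ p, (a p * U (x (Fin.castAdd n p.1)) (x (Fin.natAdd r p.2)) + b p)
        ∂Measure.pi (fun _ => μ) =
      ∑ T, (∏ p ∈ T, a p) * (∏ p ∈ Tᶜ, b p) * density μ (bipartiteGraph T) U := by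
  simp only [Finset.prod_add, Finset.prod_mul_distrib, density_bipartiteGraph,
    ← integral_const_mul, Finset.powerset_univ, ← Finset.compl_eq_univ_sdiff]
  rw [integral_finsetSum _ fun T _ => BoundedMeasurable.integrable (by fun_prop)]
  simp only [mul_right_comm]

lemma integral_prod_affine_eq_integral_prod_integral (hU : BoundedMeasurable (uncurry U))
    (a b : Fin r × Fin n → ℝ) :
    ∫ x, ∏ p, (a p * U (x (Fin.castAdd n p.1)) (x (Fin.natAdd r p.2)) + b p)
        ∂Measure.pi (fun _ => μ) =
      ∫ x : Fin r → α, ∏ j, ∫ z, ∏ i, (a (i, j) * U (x i) z + b (i, j)) ∂μ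
        ∂Measure.pi fun _ => μ := by
  have hprod : BoundedMeasurable fun x : Fin (r + n) → α =>
      ∏ p : Fin r × Fin n, (a p * U (x (Fin.castAdd n p.1)) (x (Fin.natAdd r p.2)) + b p) := by
    fun_prop
  have happend := measurePreserving_append (μ := μ) (r := r) (n := n)
  rw [← hprod.integral_comp happend, integral_prod _ (hprod.comp happend.measurable).integrable]
  simp only [Fin.append_left, Fin.append_right, Fintype.prod_prod_type_right,
    ← integral_fintype_prod_eq_prod]

theorem integral_prod_integral_eq_of_density_eq (hU : BoundedMeasurable (uncurry U))
    (hW : BoundedMeasurable (uncurry W))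
    (h : ∀ F : SimpleGraph (Fin (r + n)), density μ F U = density ν F W)
    (a b : Fin r × Fin n → ℝ) :
    ∫ x : Fin r → α, ∏ j, ∫ z, ∏ i, (a (i, j) * U (x i) z + b (i, j)) ∂μ
        ∂Measure.pi (fun _ => μ) =
      ∫ y : Fin r → β, ∏ j, ∫ z, ∏ i, (a (i, j) * W (y i) z + b (i, j)) ∂ν
        ∂Measure.pi fun _ => ν := by
  rw [← integral_prod_affine_eq_integral_prod_integral hU,
    ← integral_prod_affine_eq_integral_prod_integral hW, integral_prod_affine hU,
    integral_prod_affine hW]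
  simp only [h]

end Density

section Forcing

variable {α β : Type*} [MeasurableSpace α] [MeasurableSpace β] {μ : Measure α} {ν : Measure β}
  {U : α → α → ℝ} {W : β → β → ℝ} {n : ℕ}

/-- A functional measuring how far neighbourhoods in `U` are from being nested. If `U` is
`0`-`1`-valued, the two inner integrals are, up to sign, the measures of `N(y) \ N(x)` and
`N(x) \ N(y)`, so it vanishes exactly when almost all pairs of neighbourhoods are nested. The
square makes the integrand nonnegative for real-valued `U`. -/
def nestingDefect (μ : Measure α) (U : α → α → ℝ) : ℝ :=
  ∫ p, ((∫ z, (U p.1 z - 1) * U p.2 z ∂μ) * ∫ z, U p.1 z * (U p.2 z - 1) ∂μ) ^ 2 ∂μ.prod μ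

lemma integral_sub_one_mul [IsFiniteMeasure μ] (hU : BoundedMeasurable (uncurry U))
    (hsymm : ∀ x y, U x y = U y x) (x y : α) :
    ∫ z, (U x z - 1) * U y z ∂μ = kernelComp μ U U x y - ∫ z, U y z ∂μ := by
  simp only [sub_mul, one_mul, hsymm y]
  exact integral_sub (BoundedMeasurable.integrable (by fun_prop))
    (BoundedMeasurable.integrable (by fun_prop))

lemma nestingDefect_eq [IsFiniteMeasure μ] (hU : BoundedMeasurable (uncurry U))
    (hsymm : ∀ x y, U x y = U y x) :
    nestingDefect μ U = ∫ p, ((kernelComp μ U U p.1 p.2 - ∫ z, U p.2 z ∂μ) *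
      (kernelComp μ U U p.1 p.2 - ∫ z, U p.1 z ∂μ)) ^ 2 ∂μ.prod μ := by
  have hcomm (x y : α) : kernelComp μ U U x y = kernelComp μ U U y x := by
    simp only [kernelComp, hsymm _ x, hsymm y, mul_comm]
  have hfst (x y : α) :
      ∫ z, U x z * (U y z - 1) ∂μ = kernelComp μ U U x y - ∫ z, U x z ∂μ := by
    rw [hcomm, ← integral_sub_one_mul hU hsymm y x]
    simp only [mul_comm]
  simp only [nestingDefect, integral_sub_one_mul hU hsymm, hfst]

lemma ae_min_le_kernelComp_of_nestingDefect_eq_zero [IsFiniteMeasure μ]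
    (hU : BoundedMeasurable (uncurry U)) (hsymm : ∀ x y, U x y = U y x)
    (h : nestingDefect μ U = 0) :
    ∀ᵐ p ∂μ.prod μ, min (∫ z, U p.1 z ∂μ) (∫ z, U p.2 z ∂μ) ≤ kernelComp μ U U p.1 p.2 := by
  have hsq : BoundedMeasurable fun p : α × α => ((kernelComp μ U U p.1 p.2 - ∫ z, U p.2 z ∂μ) *
      (kernelComp μ U U p.1 p.2 - ∫ z, U p.1 z ∂μ)) ^ 2 := by
    unfold kernelComp; fun_prop
  rw [nestingDefect_eq hU hsymm] at h
  filter_upwards [(integral_eq_zero_iff_of_nonneg (fun p => sq_nonneg _) hsq.integrable).1 h]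
    with p hp
  rcases mul_eq_zero.1 (pow_eq_zero_iff two_ne_zero |>.1 hp) with hc | hc
  · exact (min_le_right _ _).trans (sub_eq_zero.1 hc).ge
  · exact (min_le_left _ _).trans (sub_eq_zero.1 hc).ge

lemma integral_integral_kernelComp_self [IsFiniteMeasure μ] (hU : BoundedMeasurable (uncurry U))
    (hsymm : ∀ x y, U x y = U y x) :
    ∫ x, ∫ y, kernelComp μ U U x y ∂μ ∂μ = ∫ z, (∫ x, U z x ∂μ) ^ 2 ∂μ := by
  have hrow (x : α) : ∫ y, kernelComp μ U U x y ∂μ = ∫ z, U x z * ∫ y, U z y ∂μ ∂μ := by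
    simpa [kernelComp] using
      (integral_mul_integral_mul (ν := μ) (f := U x) (by fun_prop) hU (.const 1)).symm
  simp only [hrow]
  have hD : BoundedMeasurable fun z => ∫ y, U z y ∂μ := by fun_prop
  calc ∫ x, ∫ z, U x z * ∫ y, U z y ∂μ ∂μ ∂μ
      = ∫ z, (∫ x, U x z ∂μ) * ∫ y, U z y ∂μ ∂μ := by
        simpa using integral_mul_integral_mul (μ := μ) (.const 1) hU hD
    _ = ∫ z, (∫ x, U z x ∂μ) ^ 2 ∂μ := by simp only [sq, fun x z => hsymm x z]

lemma integral_degree_halfGraphon_pow (k : ℕ) :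
    ∫ a : I, (∫ z, halfGraphon a z) ^ k = 1 / (k + 1) := by
  simp only [integral_halfGraphon]
  rw [integral_coe_unitInterval fun s => (1 - s) ^ k,
    intervalIntegral.integral_comp_sub_left fun s => s ^ k]
  simp

lemma nestingDefect_halfGraphon : nestingDefect volume halfGraphon = 0 := by
  rw [nestingDefect_eq boundedMeasurable_halfGraphon halfGraphon_comm]
  refine integral_eq_zero_of_ae (.of_forall fun p => ?_)
  simp only [kernelComp_halfGraphon_self, integral_halfGraphon]
  rcases min_choice (1 - p.1 : ℝ) (1 - p.2) with hmin | hmin <;> simp [hmin]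

variable [IsProbabilityMeasure μ] [IsProbabilityMeasure ν]

lemma integral_degree_pow_eq (hU : BoundedMeasurable (uncurry U)) {k : ℕ} (hk : k ≤ n) :
    ∫ x, (∫ z, U x z ∂μ) ^ k ∂μ =
      ∫ x : Fin 1 → α, ∏ j : Fin n, ∫ z, ∏ i, ((if (j : ℕ) < k then 1 else 0) * U (x i) z +
        if (j : ℕ) < k then 0 else 1) ∂μ ∂Measure.pi fun _ => μ := by
  have hfactor (x : α) (j : Fin n) : ∫ z, ((if (j : ℕ) < k then 1 else 0) * U x z +
      if (j : ℕ) < k then 0 else 1) ∂μ = if (j : ℕ) < k then ∫ z, U x z ∂μ else 1 := by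
    split_ifs <;> simp
  have hpow : BoundedMeasurable fun x => (∫ z, U x z ∂μ) ^ k := by fun_prop
  rw [← hpow.integral_comp (measurePreserving_eval (fun _ : Fin 1 => μ) 0)]
  simp only [Finset.univ_unique, Finset.prod_singleton, hfactor, Finset.prod_ite,
    Finset.prod_const, one_pow, mul_one, Fin.card_filter_val_lt, min_eq_right hk]
  rfl

lemma integral_degree_pow_eq_of_density_eq (hU : BoundedMeasurable (uncurry U))
    (hW : BoundedMeasurable (uncurry W))
    (h : ∀ F : SimpleGraph (Fin (1 + n)), density μ F U = density ν F W) {k : ℕ} (hk : k ≤ n) :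
    ∫ x, (∫ z, U x z ∂μ) ^ k ∂μ = ∫ y, (∫ z, W y z ∂ν) ^ k ∂ν := by
  rw [integral_degree_pow_eq hU hk, integral_degree_pow_eq hW hk]
  exact integral_prod_integral_eq_of_density_eq hU hW h
    (fun p => if (p.2 : ℕ) < k then 1 else 0) fun p => if (p.2 : ℕ) < k then 0 else 1

lemma nestingDefect_eq_integral_prod (hU : BoundedMeasurable (uncurry U)) :
    nestingDefect μ U = ∫ x : Fin 2 → α, ∏ j : Fin 4, ∫ z, ∏ i,
      (1 * U (x i) z + if (i : ℕ) = j % 2 then -1 else 0) ∂μ ∂Measure.pi fun _ => μ := by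
  have hsq : BoundedMeasurable fun p : α × α =>
      ((∫ z, (U p.1 z - 1) * U p.2 z ∂μ) * ∫ z, U p.1 z * (U p.2 z - 1) ∂μ) ^ 2 := by fun_prop
  rw [nestingDefect, ← hsq.integral_comp (measurePreserving_finTwoArrow μ)]
  congr! 2 with x
  simp only [MeasurableEquiv.finTwoArrow_apply, Fin.prod_univ_two, Fin.prod_univ_four,
    Fin.isValue, Fin.coe_ofNat_eq_mod, Nat.zero_mod, Nat.one_mod, Nat.mod_self, Nat.mod_succ,
    Nat.reduceMod, zero_ne_one, one_ne_zero, ↓reduceIte, one_mul, add_zero, ← sub_eq_add_neg]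
  ring

lemma nestingDefect_eq_of_density_eq (hU : BoundedMeasurable (uncurry U))
    (hW : BoundedMeasurable (uncurry W))
    (h : ∀ F : SimpleGraph (Fin (2 + 4)), density μ F U = density ν F W) :
    nestingDefect μ U = nestingDefect ν W := by
  rw [nestingDefect_eq_integral_prod hU, nestingDefect_eq_integral_prod hW]
  exact integral_prod_integral_eq_of_density_eq hU hW h (fun _ => 1)
    fun p => if (p.1 : ℕ) = p.2 % 2 then -1 else 0

theorem exists_measurePreserving_ae_eq_halfGraphon (hU : BoundedMeasurable (uncurry U))
    (hsymm : ∀ x y, U x y = U y x)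
    (h : ∀ F : SimpleGraph (Fin 6), density μ F U = density volume F halfGraphon) :
    ∃ φ : α → I, MeasurePreserving φ μ volume ∧
      ∀ᵐ p ∂μ.prod μ, U p.1 p.2 = halfGraphon (φ p.1) (φ p.2) := by
  have hW := boundedMeasurable_halfGraphon
  have hmoment {k : ℕ} (hk : k ≤ 5) : ∫ x, (∫ z, U x z ∂μ) ^ k ∂μ = 1 / (k + 1) :=
    (integral_degree_pow_eq_of_density_eq hU hW h hk).trans (integral_degree_halfGraphon_pow k)
  have hdefect : nestingDefect μ U = 0 :=
    (nestingDefect_eq_of_density_eq hU hW h).trans nestingDefect_halfGraphon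
  have hD1 : ∫ x, ∫ z, U x z ∂μ ∂μ = 1 / 2 := by
    simpa [one_add_one_eq_two] using hmoment (k := 1) (by norm_num)
  have hD2 : ∫ x, (∫ z, U x z ∂μ) ^ 2 ∂μ = 1 / 3 :=
    (hmoment (k := 2) (by norm_num)).trans (by norm_num)
  obtain ⟨ψ, hψ, hdeg, hUU⟩ := exists_measurePreserving_of_min_le
    (c := kernelComp μ U U) (by fun_prop) (by unfold kernelComp; simp only [uncurry_def]; fun_prop)
    hD1 hD2 ((integral_integral_kernelComp_self hU hsymm).trans hD2)
    (ae_min_le_kernelComp_of_nestingDefect_eq_zero hU hsymm hdefect)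
  have hφ := measurePreserving_symm.comp hψ
  refine ⟨_, hφ, ae_eq_halfGraphon_comp hU hsymm hφ ?_ ?_⟩
  · filter_upwards [hdeg] with x hx
    simp [hx]
  · filter_upwards [hUU] with p hp
    simp [hp, kernelComp_halfGraphon_self]

end Forcing

section Cube

lemma volume_restrict_cube (n : ℕ) :
    (volume : Measure (Fin n → ℝ)).restrict (cube n) =
      Measure.pi fun _ => volume.restrict (Set.Icc 0 1) := by
  rw [cube, volume_pi, Measure.restrict_pi_pi]
  rfl

lemma homDensity_eq_density {W : ℝ → ℝ → ℝ} (hW : Measurable (uncurry W)) {n : ℕ}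
    (F : SimpleGraph (Fin n)) :
    homDensity F W = density volume F fun x y : I => W x y := by
  have hcoe := measurePreserving_pi (fun _ : Fin n => volume)
    (fun _ => volume.restrict (Set.Icc 0 1)) fun _ => unitInterval.measurePreserving_coe
  have hprod : Measurable fun x : Fin n → ℝ =>
      ∏ p ∈ Finset.univ.filter (fun p : Fin n × Fin n => p.1 < p.2 ∧ F.Adj p.1 p.2),
        W (x p.1) (x p.2) := Finset.measurable_prod _ fun p _ => by fun_prop
  rw [homDensity, volume_restrict_cube, ← hcoe.map_eq,
    integral_map hcoe.aemeasurable hprod.aestronglyMeasurable]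
  rfl

lemma boundedMeasurable_of_memW {U : ℝ → ℝ → ℝ} (hU : memW U) :
    BoundedMeasurable (uncurry fun x y : I => U x y) := by
  obtain ⟨hm, -, C, hC⟩ := hU
  exact ⟨by fun_prop, C, fun p => hC _ p.1.2 _ p.2.2⟩

lemma memW_ite_add_le_one : memW fun x y => if x + y ≤ 1 then (1 : ℝ) else 0 := by
  refine ⟨.ite (measurableSet_le (by fun_prop) measurable_const) measurable_const
    measurable_const, fun x _ y _ => by simp only [add_comm], 1, fun x _ y _ => ?_⟩
  dsimp only
  split_ifs <;> simp

end Cube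

/-- the half-graphon `W_h(x,y) = 1_{x+y ≤ 1}` is finitely forcible in `𝒲`. -/
theorem statement8 :
    FinitelyForcible memW (fun x y => if x + y ≤ 1 then (1 : ℝ) else 0) := by
  refine ⟨memW_ite_add_le_one, Nat.card (SimpleGraph (Fin 6)), fun _ => 6,
    (Finite.equivFin (SimpleGraph (Fin 6))).symm, fun U hU h n F => ?_⟩
  have hWm := memW_ite_add_le_one.1
  have hdensity (G : SimpleGraph (Fin 6)) :
      density volume G (fun x y : I => U x y) = density volume G halfGraphon := by
    obtain ⟨i, rfl⟩ := (Finite.equivFin (SimpleGraph (Fin 6))).symm.surjective G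
    rw [← homDensity_eq_density hU.1, h i, homDensity_eq_density hWm]
    rfl
  obtain ⟨φ, hφ, hUφ⟩ := exists_measurePreserving_ae_eq_halfGraphon (boundedMeasurable_of_memW hU)
    (fun x y => hU.2.1 x x.2 y y.2) hdensity
  rw [homDensity_eq_density hU.1, homDensity_eq_density hWm]
  exact density_eq_of_ae_eq_comp boundedMeasurable_halfGraphon hφ hUφ F
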